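/- The Böhm preorder is included in the black checkers type preorder: for all λ-terms t, u, if t ⊑B u then t ⊑•type u, i.e. ⟦t^•⟧⊛ ⊆ ⟦u^•⟧⊛. -/

import Mathlib

set_option autoImplicit false

/-! ### Players -/

inductive Player : Type
  | white
  | black
deriving DecidableEq

/-- The opposite player. -/
def Player.op : Player → Player
  | .white => .black
  | .black => .white

/-- `gamma p q` is `0` if the players agree (silent) and `1` otherwise (interaction). -/
def Player.gamma (p q : Player) : ℕ := if p = q then 0 else 1

/-! ### Ordinary λ-terms (de Bruijn representation) -/

inductive Lam : Type
  | var : ℕ → Lam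
  | lam : Lam → Lam
  | app : Lam → Lam → Lam
deriving DecidableEq

namespace Lam

/-- Shift the free de Bruijn indices ≥ `d` by one. -/
def liftAt : Lam → ℕ → Lam
  | .var n, d => .var (if n < d then n else n + 1)
  | .lam t, d => .lam (t.liftAt (d + 1))
  | .app t u, d => .app (t.liftAt d) (u.liftAt d)

/-- Capture-avoiding substitution of `u` for the de Bruijn index `x`. -/
def subst : Lam → ℕ → Lam → Lam
  | .var n, x, u => if n = x then u else if x < n then .var (n - 1) else .var n
  | .lam t, x, u => .lam (t.subst (x + 1) (u.liftAt 0))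
  | .app t s, x, u => .app (t.subst x u) (s.subst x u)

end Lam

/-- Root β-rule: `(λx.t) u ↦ t[x:=u]`. -/
inductive LBetaRoot : Lam → Lam → Prop
  | beta (t u : Lam) : LBetaRoot (.app (.lam t) u) (t.subst 0 u)

/-- Root η-rule: `λx. t x ↦ t` with `x ∉ FV(t)` (enforced by the lifting). -/
inductive LEtaRoot : Lam → Lam → Prop
  | eta (t : Lam) : LEtaRoot (.lam (.app (t.liftAt 0) (.var 0))) t

/-- Closure of a root relation under all contexts. -/
inductive LFull (R : Lam → Lam → Prop) : Lam → Lam → Prop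
  | root {t u : Lam} : R t u → LFull R t u
  | lam {t u : Lam} : LFull R t u → LFull R (.lam t) (.lam u)
  | appL {t t' : Lam} (u : Lam) : LFull R t t' → LFull R (.app t u) (.app t' u)
  | appR (t : Lam) {u u' : Lam} : LFull R u u' → LFull R (.app t u) (.app t u')

/-- Closure under applicative spine contexts `⟨·⟩ t1 … tk`. -/
inductive LSpine (R : Lam → Lam → Prop) : Lam → Lam → Prop
  | root {t u : Lam} : R t u → LSpine R t u
  | appL {t t' : Lam} (u : Lam) : LSpine R t t' → LSpine R (.app t u) (.app t' u)

/-- Closure under head contexts `λx1…xn.⟨·⟩ t1 … tk`. -/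
inductive LHead (R : Lam → Lam → Prop) : Lam → Lam → Prop
  | spine {t u : Lam} : LSpine R t u → LHead R t u
  | lam {t u : Lam} : LHead R t u → LHead R (.lam t) (.lam u)

/-- β-reduction. -/
def LBeta : Lam → Lam → Prop := LFull LBetaRoot
/-- η-reduction. -/
def LEta : Lam → Lam → Prop := LFull LEtaRoot
/-- Head reduction. -/
def LHStep : Lam → Lam → Prop := LHead LBetaRoot
/-- Multistep head reduction. -/
def LHSteps : Lam → Lam → Prop := Relation.ReflTransGen LHStep

/-- β-conversion (reflexive-symmetric-transitive closure of β-reduction). -/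
def LBetaConv : Lam → Lam → Prop :=
  Relation.ReflTransGen (fun a b => LBeta a b ∨ LBeta b a)
/-- η-conversion. -/
def LEtaConv : Lam → Lam → Prop :=
  Relation.ReflTransGen (fun a b => LEta a b ∨ LEta b a)

/-- Head normal forms: no head step out of `t`. -/
def Lam.LHNF (t : Lam) : Prop := ∀ u, ¬ LHStep t u

/-- Head convergence: `t ⇓h`. -/
def Lam.HConv (t : Lam) : Prop := ∃ h, LHSteps t h ∧ h.LHNF

/-- Ordinary contexts (one hole). -/
inductive LCtx : Type
  | hole : LCtx
  | lam : LCtx → LCtx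
  | appL : LCtx → Lam → LCtx
  | appR : Lam → LCtx → LCtx

/-- Plugging (allowing variable capture). -/
def LCtx.fill : LCtx → Lam → Lam
  | .hole, t => t
  | .lam C, t => .lam (C.fill t)
  | .appL C u, t => .app (C.fill t) u
  | .appR s C, t => .app s (C.fill t)

/-- Head contextual preorder on λ-terms. -/
def CtxLe (t u : Lam) : Prop := ∀ C : LCtx, (C.fill t).HConv → (C.fill u).HConv

/-! ### Checkers terms -/

inductive CTerm : Type
  | var : ℕ → CTerm
  | lam : Player → CTerm → CTerm
  | app : Player → CTerm → CTerm → CTerm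
deriving DecidableEq

namespace CTerm

/-- Shift the free de Bruijn indices ≥ `d` by one. -/
def liftAt : CTerm → ℕ → CTerm
  | .var n, d => .var (if n < d then n else n + 1)
  | .lam p t, d => .lam p (t.liftAt (d + 1))
  | .app p t u, d => .app p (t.liftAt d) (u.liftAt d)

/-- Capture-avoiding substitution of `u` for the de Bruijn index `x`. -/
def subst : CTerm → ℕ → CTerm → CTerm
  | .var n, x, u => if n = x then u else if x < n then .var (n - 1) else .var n
  | .lam p t, x, u => .lam p (t.subst (x + 1) (u.liftAt 0))
  | .app p t s, x, u => .app p (t.subst x u) (s.subst x u)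

/-- The underlying ordinary λ-term of a checkers term. -/
def untag : CTerm → Lam
  | .var n => .var n
  | .lam _ t => .lam t.untag
  | .app _ t u => .app t.untag u.untag

end CTerm

/-- Player lifting: tag every abstraction and application with player `p`. -/
def Lam.tag : Lam → Player → CTerm
  | .var n, _ => .var n
  | .lam t, p => .lam p (t.tag p)
  | .app t u, p => .app p (t.tag p) (u.tag p)

/-- Silent β root rule: the abstraction and the application carry the same player. -/
inductive SilentRoot : CTerm → CTerm → Prop
  | beta (p : Player) (t u : CTerm) : SilentRoot (.app p (.lam p t) u) (t.subst 0 u)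

/-- Interaction β root rule: the application carries the opposite player of the abstraction. -/
inductive InterRoot : CTerm → CTerm → Prop
  | beta (p : Player) (t u : CTerm) : InterRoot (.app p.op (.lam p t) u) (t.subst 0 u)

/-- Closure of a root relation under all checkers contexts. -/
inductive CFull (R : CTerm → CTerm → Prop) : CTerm → CTerm → Prop
  | root {t u : CTerm} : R t u → CFull R t u
  | lam (p : Player) {t u : CTerm} : CFull R t u → CFull R (.lam p t) (.lam p u)
  | appL (p : Player) {t t' : CTerm} (u : CTerm) : CFull R t t' → CFull R (.app p t u) (.app p t' u)
  | appR (p : Player) (t : CTerm) {u u' : CTerm} : CFull R u u' → CFull R (.app p t u) (.app p t u')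

/-- Closure under applicative spine contexts `⟨·⟩ @_{q1} t1 … @_{qk} tk`. -/
inductive CSpine (R : CTerm → CTerm → Prop) : CTerm → CTerm → Prop
  | root {t u : CTerm} : R t u → CSpine R t u
  | appL (p : Player) {t t' : CTerm} (u : CTerm) : CSpine R t t' → CSpine R (.app p t u) (.app p t' u)

/-- Closure under checkers head contexts `λ_{p1}x1…λ_{pn}xn.⟨·⟩ @_{q1} t1 … @_{qk} tk`. -/
inductive CHead (R : CTerm → CTerm → Prop) : CTerm → CTerm → Prop
  | spine {t u : CTerm} : CSpine R t u → CHead R t u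
  | lam (p : Player) {t u : CTerm} : CHead R t u → CHead R (.lam p t) (.lam p u)

/-- Silent β-reduction `→τ`. -/
def StepTau : CTerm → CTerm → Prop := CFull SilentRoot
/-- Interaction β-reduction `→⊛`. -/
def StepInt : CTerm → CTerm → Prop := CFull InterRoot
/-- Checkers β-reduction `→βch`. -/
def StepBch (t u : CTerm) : Prop := StepTau t u ∨ StepInt t u

/-- Silent head reduction `→hτ`. -/
def HStepTau : CTerm → CTerm → Prop := CHead SilentRoot
/-- Interaction head reduction `→h⊛`. -/
def HStepInt : CTerm → CTerm → Prop := CHead InterRoot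
/-- Checkers head reduction `→hch`. -/
def HStepCh (t u : CTerm) : Prop := HStepTau t u ∨ HStepInt t u

/-- Checkers head normal form. -/
def CTerm.HNF (t : CTerm) : Prop := ∀ u, ¬ HStepCh t u

/-- `BigStep t k` means `t ⇓^k`: the (deterministic) checkers head evaluation of `t`
terminates and performs exactly `k` interaction steps. -/
inductive BigStep : CTerm → ℕ → Prop
  | nf {t : CTerm} : t.HNF → BigStep t 0
  | silent {t u : CTerm} {k : ℕ} : HStepTau t u → BigStep u k → BigStep t k
  | inter {t u : CTerm} {k : ℕ} : HStepInt t u → BigStep u k → BigStep t (k + 1)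

/-- `HRed t n i u`: a checkers head reduction sequence from `t` to `u` of length `n`
containing exactly `i` interaction steps. -/
inductive HRed : CTerm → ℕ → ℕ → CTerm → Prop
  | refl (t : CTerm) : HRed t 0 0 t
  | silent {t u s : CTerm} {n i : ℕ} : HStepTau t u → HRed u n i s → HRed t (n + 1) i s
  | inter {t u s : CTerm} {n i : ℕ} : HStepInt t u → HRed u n i s → HRed t (n + 1) (i + 1) s

/-- Checkers contexts (one hole). -/
inductive CCtx : Type
  | hole : CCtx
  | lam : Player → CCtx → CCtx
  | appL : Player → CCtx → CTerm → CCtx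
  | appR : Player → CTerm → CCtx → CCtx

/-- Plugging (allowing variable capture). -/
def CCtx.fill : CCtx → CTerm → CTerm
  | .hole, t => t
  | .lam p C, t => .lam p (C.fill t)
  | .appL p C u, t => .app p (C.fill t) u
  | .appR p s C, t => .app p s (C.fill t)

/-- Player lifting of ordinary contexts. -/
def LCtx.tag : LCtx → Player → CCtx
  | .hole, _ => .hole
  | .lam C, p => .lam p (C.tag p)
  | .appL C u, p => .appL p (C.tag p) (u.tag p)
  | .appR s C, p => .appR p (s.tag p) (C.tag p)

/-- Checkers interaction preorder `≼ctx⊛` on checkers terms. -/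
def IntCtxLe (t u : CTerm) : Prop :=
  ∀ (C : CCtx) (k : ℕ), BigStep (C.fill t) k → BigStep (C.fill u) k

/-- Checkers interaction improvement `≼imp⊛` on checkers terms. -/
def ImpCtxLe (t u : CTerm) : Prop :=
  ∀ (C : CCtx) (k : ℕ), BigStep (C.fill t) k → ∃ k', k' ≤ k ∧ BigStep (C.fill u) k'

/-- Interaction preorder `⊑int` on ordinary λ-terms, via black lifting. -/
def IntLe (t u : Lam) : Prop := IntCtxLe (t.tag .black) (u.tag .black)

/-- Interaction improvement `⊑int·imp` on ordinary λ-terms, via black lifting. -/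
def ImpLe (t u : Lam) : Prop := ImpCtxLe (t.tag .black) (u.tag .black)

/-- Interaction equivalence `≡int`. -/
def IntEq (t u : Lam) : Prop := IntLe t u ∧ IntLe u t

/-- Silent conversion `=τ`: reflexive-symmetric-transitive closure of `→τ`. -/
def SilentConv : CTerm → CTerm → Prop :=
  Relation.ReflTransGen (fun a b => StepTau a b ∨ StepTau b a)


/-! ### Checkers multi types -/

/-- Linear types: an atom `X` and arrows `M →_{p,q} L`, where a multi type `M`
is a finite multiset of linear types (syntactically represented as a list). -/
inductive LType : Type
  | atom : LType
  | arrow : List LType → Player → Player → LType → LType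

/-- Type environments: a multi type for every de Bruijn index. -/
abbrev TEnv : Type := ℕ → Multiset LType

/-- The empty type environment. -/
def TEnv.zero : TEnv := fun _ => 0

/-- Pointwise multiset union of type environments. -/
def TEnv.add (Γ Δ : TEnv) : TEnv := fun n => Γ n + Δ n

/-- The environment assigning `[L]` to `x` and `0` elsewhere. -/
def TEnv.single (x : ℕ) (L : LType) : TEnv := fun n => if n = x then {L} else 0

/-- Extend an environment with a multi type for the freshly bound de Bruijn index `0`. -/
def TEnv.cons (M : Multiset LType) (Γ : TEnv) : TEnv := fun n =>
  match n with
  | 0 => M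
  | n + 1 => Γ n

mutual
  /-- Type derivations `π ▷ Γ ⊢^k t : L` of the checkers multi type system. -/
  inductive Deriv : TEnv → ℕ → CTerm → LType → Type
    | ax (x : ℕ) (L : LType) : Deriv (TEnv.single x L) 0 (.var x) L
    | lam {Γ : TEnv} {k : ℕ} {t : CTerm} {L : LType} (p q : Player) (M : List LType) :
        Deriv (TEnv.cons (Multiset.ofList M) Γ) k t L →
        Deriv Γ k (.lam p t) (.arrow M p q L)
    | app {Γ Δ : TEnv} {k₁ k₂ : ℕ} {t u : CTerm} {M : List LType} {p q : Player} {L : LType} :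
        Deriv Γ k₁ t (.arrow M p q L) → DerivM Δ k₂ u M →
        Deriv (TEnv.add Γ Δ) (k₁ + k₂ + Player.gamma p q) (.app q t u) L
  /-- Derivations `Γ ⊢^k t : M` of a multi type (the `many` rule). -/
  inductive DerivM : TEnv → ℕ → CTerm → List LType → Type
    | nil (t : CTerm) : DerivM TEnv.zero 0 t []
    | cons {Γ Δ : TEnv} {k k' : ℕ} {t : CTerm} {L : LType} {M : List LType} :
        Deriv Γ k t L → DerivM Δ k' t M → DerivM (TEnv.add Γ Δ) (k + k') t (L :: M)
end

mutual
  /-- The (applicative) size `|π|` of a derivation: its number of `@` rules. -/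
  def Deriv.size {Γ : TEnv} {k : ℕ} {t : CTerm} {L : LType} : Deriv Γ k t L → ℕ
    | .ax _ _ => 0
    | .lam _ _ _ π => Deriv.size π
    | .app π μ => Deriv.size π + DerivM.size μ + 1
  /-- Size of a multi-type derivation. -/
  def DerivM.size {Γ : TEnv} {k : ℕ} {t : CTerm} {M : List LType} : DerivM Γ k t M → ℕ
    | .nil _ => 0
    | .cons π μ => Deriv.size π + DerivM.size μ
end

/-- Typability `Γ ⊢^k t : L`. -/
def TJ (Γ : TEnv) (k : ℕ) (t : CTerm) (L : LType) : Prop := Nonempty (Deriv Γ k t L)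

/-- Checkers relational interpretation `⟦t⟧⊛ = {(Γ, k, L) | Γ ⊢^k t : L}`. -/
def CSem (t : CTerm) : Set (TEnv × ℕ × LType) := {x | TJ x.1 x.2.1 t x.2.2}

/-- Black type preorder `⊑•type` on ordinary λ-terms. -/
def BTypeLe (t u : Lam) : Prop := CSem (t.tag .black) ⊆ CSem (u.tag .black)

/-! ### Tight typings -/

/-- All arrows occurring in a linear type are silent (`p = q`). -/
inductive AllSilent : LType → Prop
  | atom : AllSilent .atom
  | arrow {M : List LType} {p : Player} {L : LType} :
      (∀ L' ∈ M, AllSilent L') → AllSilent L → AllSilent (.arrow M p p L)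

/-- The number of nonempty multi types occurring in a linear type. -/
def LType.neCount : LType → ℕ
  | .atom => 0
  | .arrow M _ _ L =>
      min M.length 1 + (M.attach.map fun x => LType.neCount x.1).sum + LType.neCount L
decreasing_by
  · have := List.sizeOf_lt_of_mem x.2
    simp only [LType.arrow.sizeOf_spec]
    omega
  · simp only [LType.arrow.sizeOf_spec]
    omega

/-- The number of nonempty multi types occurring in a multi type (counting itself). -/
def mNeCount (m : Multiset LType) : ℕ :=
  min (Multiset.card m) 1 + (m.map LType.neCount).sum

/-- A typing `(Γ, L)` is tight when all the multi types occurring in `Γ` and `L`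
are empty except for exactly one, and all arrows occurring in `(Γ, L)` are silent. -/
def Tight (Γ : TEnv) (L : LType) : Prop :=
  AllSilent L ∧ (∀ n : ℕ, ∀ L' ∈ Γ n, AllSilent L') ∧
    ∃ S : Finset ℕ, (∀ n : ℕ, n ∉ S → Γ n = 0) ∧
      (∑ n ∈ S, mNeCount (Γ n)) + LType.neCount L = 1

/-! ### Böhm preorders -/

/-- `n` abstractions in front of a term. -/
def Lam.absN : ℕ → Lam → Lam
  | 0, t => t
  | n + 1, t => .lam (Lam.absN n t)

/-- Left-nested application of a term to a list of arguments. -/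
def Lam.appList : Lam → List Lam → Lam
  | t, [] => t
  | t, u :: us => Lam.appList (.app t u) us

/-- One unfolding of the Böhm preorder clauses. -/
def BohmClause (R : Lam → Lam → Prop) (t u : Lam) : Prop :=
  (¬ t.HConv) ∨
    ∃ (n y : ℕ) (ts us : List Lam),
      ts.length = us.length ∧
      LHSteps t (Lam.absN n (Lam.appList (.var y) ts)) ∧
      LHSteps u (Lam.absN n (Lam.appList (.var y) us)) ∧
      ∀ (i : ℕ) (hi : i < ts.length) (hj : i < us.length), R (ts.get ⟨i, hi⟩) (us.get ⟨i, hj⟩)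

/-- The Böhm preorder `⊑B`: the largest relation closed under the clauses. -/
def BohmLe (t u : Lam) : Prop :=
  ∃ R : Lam → Lam → Prop, (∀ a b, R a b → BohmClause R a b) ∧ R t u

/-- One unfolding of the extensional Böhm preorder clauses. -/
def BohmEtaClause (R : Lam → Lam → Prop) (t u : Lam) : Prop :=
  (¬ t.HConv) ∨
    ∃ (n y : ℕ) (ts us : List Lam) (h h' : Lam),
      ts.length = us.length ∧
      LHSteps t h ∧ h.LHNF ∧ LEtaConv h (Lam.absN n (Lam.appList (.var y) ts)) ∧
      LHSteps u h' ∧ h'.LHNF ∧ LEtaConv h' (Lam.absN n (Lam.appList (.var y) us)) ∧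
      ∀ (i : ℕ) (hi : i < ts.length) (hj : i < us.length), R (ts.get ⟨i, hi⟩) (us.get ⟨i, hj⟩)

/-- The extensional Böhm preorder `⊑Bλη`: the largest relation closed under the clauses. -/
def BohmEtaLe (t u : Lam) : Prop :=
  ∃ R : Lam → Lam → Prop, (∀ a b, R a b → BohmEtaClause R a b) ∧ R t u

/-! Refine the interpretation of a checkers term by the size of the derivations. The weights
`(Γ, k, n)` of derivations form a commutative monoid, hence so do sets of weights, and there a
multi type denotes a sum. Substitution then acts on weights as a monoid homomorphism, so that the
substitution lemma is an equation between sets of weights, giving subject reduction and expansion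
at once: a silent head step leaves the environment, the interaction count and the type alone and
decreases the size by one. In particular typable terms have a head normal form, and a derivation
of size less than `N` inspects the Böhm tree only down to depth `N`, because it types the
arguments of a head normal form with strictly smaller size. Induction on `N` concludes. -/

section SetLift

open scoped Pointwise

variable {A B : Type*} [AddZeroClass A] [AddZeroClass B]

/-- The union-preserving extension of `θ : A →+ Set B` to sets of elements of `A`. -/
def setLift (θ : A →+ Set B) : Set A →+ Set B where
  toFun S := ⋃ a ∈ S, θ a
  map_zero' := by simp
  map_add' S T := by
    ext b
    simp only [Set.mem_iUnion, Set.mem_add, exists_prop]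
    constructor
    · rintro ⟨_, ⟨a, ha, a', ha', rfl⟩, hb⟩
      rw [map_add] at hb
      obtain ⟨c, hc, c', hc', rfl⟩ := hb
      exact ⟨c, ⟨a, ha, hc⟩, c', ⟨a', ha', hc'⟩, rfl⟩
    · rintro ⟨c, ⟨a, ha, hc⟩, c', ⟨a', ha', hc'⟩, rfl⟩
      refine ⟨a + a', ⟨a, ha, a', ha', rfl⟩, ?_⟩
      rw [map_add]
      exact Set.add_mem_add hc hc'

theorem setLift_apply (θ : A →+ Set B) (S : Set A) : setLift θ S = ⋃ a ∈ S, θ a :=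
  rfl

theorem mem_setLift {θ : A →+ Set B} {S : Set A} {b : B} :
    b ∈ setLift θ S ↔ ∃ a ∈ S, b ∈ θ a := by
  simp [setLift_apply]

@[simp]
theorem setLift_singleton (θ : A →+ Set B) (a : A) : setLift θ {a} = θ a := by
  simp [setLift_apply]

theorem setLift_iUnion {ι : Sort*} (θ : A →+ Set B) (S : ι → Set A) :
    setLift θ (⋃ i, S i) = ⋃ i, setLift θ (S i) :=
  Set.biUnion_iUnion _ _

theorem setLift_singletonAddMonoidHom_comp (f : A →+ B) (S : Set A) :
    setLift (Set.singletonAddMonoidHom.comp f) S = f '' S := by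
  simp [setLift_apply, Set.image_eq_iUnion]

end SetLift

/-! ### Weights of derivations -/

/-- What a derivation of `Γ ⊢^k t : L` of size `n` says apart from its subject `t` and its type
`L`, namely `(Γ, k, n)`. Weights add up componentwise. -/
abbrev DerivWeight : Type := TEnv × ℕ × ℕ

namespace DerivWeight

/-- Insertion of a multi type for a new variable with de Bruijn index `x`. -/
def insert (x : ℕ) : Multiset LType × DerivWeight ≃+ DerivWeight where
  toFun a := (fun n => if n < x then a.2.1 n else if n = x then a.1 else a.2.1 (n - 1), a.2.2)
  invFun w := (w.1 x, fun n => if n < x then w.1 n else w.1 (n + 1), w.2)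
  left_inv a := by
    refine Prod.ext (by simp) (Prod.ext ?_ rfl)
    funext n
    dsimp only
    split_ifs <;> first | rfl | omega
  right_inv w := by
    refine Prod.ext ?_ rfl
    funext n
    dsimp only
    split_ifs with _ h
    · rfl
    · rw [h]
    · omega
    · rw [Nat.sub_add_cancel (by omega)]
  map_add' a b := by
    refine Prod.ext ?_ rfl
    funext n
    simp only [Prod.fst_add, Prod.snd_add, Pi.add_apply]
    split_ifs <;> rfl

theorem insert_zero (M : Multiset LType) (Γ : TEnv) (c : ℕ × ℕ) :
    insert 0 (M, Γ, c) = (TEnv.cons M Γ, c) := by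
  refine Prod.ext ?_ rfl
  funext n
  cases n <;> rfl

theorem insert_cost (x : ℕ) (c : ℕ × ℕ) : insert x (0, 0, c) = (0, c) :=
  Prod.ext (funext fun n => by simp [insert]) rfl

theorem insert_cost_add (x : ℕ) (M : Multiset LType) (c : ℕ × ℕ) (w : DerivWeight) :
    insert x (M, (0, c) + w) = (0, c) + insert x (M, w) := by
  conv_rhs => rw [← insert_cost x c, ← map_add]
  exact congrArg _ (Prod.ext (zero_add M).symm rfl)

theorem insert_succ_insert_zero (x : ℕ) (M N : Multiset LType) (w : DerivWeight) :
    insert (x + 1) (M, insert 0 (N, w)) = insert 0 (N, insert x (M, w)) := by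
  refine Prod.ext ?_ rfl
  funext n
  cases n with
  | zero => rfl
  | succ n =>
    simp only [insert, AddEquiv.coe_mk, Equiv.coe_fn_mk]
    grind

theorem insert_zero_single (x n : ℕ) (L : LType) :
    insert x (0, TEnv.single n L, 0) = (TEnv.single (if n < x then n else n + 1) L, 0) := by
  refine Prod.ext ?_ rfl
  funext m
  simp only [insert, TEnv.single, AddEquiv.coe_mk, Equiv.coe_fn_mk]
  grind

theorem insert_singleton_zero (x : ℕ) (L : LType) :
    insert x ({L}, 0) = (TEnv.single x L, 0) := by
  refine Prod.ext ?_ rfl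
  funext m
  simp only [insert, TEnv.single, AddEquiv.coe_mk, Equiv.coe_fn_mk,
    Prod.fst_zero, Pi.zero_apply]
  grind

end DerivWeight

/-! ### Interpretations -/

/-- For every linear type, a set of weights: the form of the denotation of a checkers term. -/
abbrev Interp : Type := LType → Set DerivWeight

namespace Interp

open scoped Pointwise

/-- The interpretation of multi types given by the `many` rule. -/
def many (P : Interp) : Multiset LType →+ Set DerivWeight :=
  Multiset.sumAddMonoidHom.comp (Multiset.mapAddMonoidHom P)

/-- The interpretation of the variable with de Bruijn index `x`. -/
def var (x : ℕ) : Interp := fun L => {(TEnv.single x L, 0)}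

/-- The interpretation of `λ_p x.t` in terms of that of `t`. -/
def abs (p : Player) (P : Interp) : Interp
  | .atom => ∅
  | .arrow M p' _ L => {w | p' = p ∧ DerivWeight.insert 0 (↑M, w) ∈ P L}

/-- The interpretation of `t @_q u` in terms of those of `t` and `u`. -/
def app (q : Player) (P U : Interp) : Interp := fun L =>
  ⋃ (M : List LType) (p : Player), {(0, p.gamma q, 1)} + (P (.arrow M p q L) + many U ↑M)

/-- The interpretation `P` with the cost `c` of a head step paid on top of every weight. -/
def addCost (c : ℕ × ℕ) (P : Interp) : Interp := fun L => {(0, c)} + P L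

theorem many_apply (P : Interp) (M : Multiset LType) : many P M = (M.map P).sum :=
  rfl

theorem many_cons (P : Interp) (L : LType) (M : Multiset LType) :
    many P (L ::ₘ M) = P L + many P M := by
  simp [many_apply]

theorem many_singleton (P : Interp) (L : LType) : many P {L} = P L := by
  simp [many_apply]

theorem mem_app_iff {q : Player} {P U : Interp} {L : LType} {w : DerivWeight} :
    w ∈ app q P U L ↔ ∃ (M : List LType) (p : Player), ∃ v ∈ P (.arrow M p q L), ∃ u ∈ many U ↑M,
      (0, p.gamma q, 1) + (v + u) = w := by
  simp only [app, Set.mem_iUnion, Set.singleton_add, Set.mem_image]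
  constructor
  · rintro ⟨M, p, _, ⟨v, hv, u, hu, rfl⟩, rfl⟩
    exact ⟨M, p, v, hv, u, hu, rfl⟩
  · rintro ⟨M, p, v, hv, u, hu, rfl⟩
    exact ⟨M, p, _, Set.add_mem_add hv hu, rfl⟩

theorem mem_addCost_iff {c : ℕ × ℕ} {P : Interp} {L : LType} {w : DerivWeight} :
    w ∈ addCost c P L ↔ ∃ v ∈ P L, (0, c) + v = w := by
  rw [addCost, Set.singleton_add, Set.mem_image]

theorem mk_mem_addCost_iff {i m k n : ℕ} {P : Interp} {L : LType} {Γ : TEnv} :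
    (Γ, k, n) ∈ addCost (i, m) P L ↔ ∃ k' n', (Γ, k', n') ∈ P L ∧ i + k' = k ∧ m + n' = n := by
  simp [mem_addCost_iff]

theorem addCost_zero (P : Interp) : addCost 0 P = P :=
  funext fun _ => zero_add _

theorem addCost_addCost (c c' : ℕ × ℕ) (P : Interp) :
    addCost c (addCost c' P) = addCost (c + c') P := by
  funext L
  simp only [addCost, ← add_assoc, Set.singleton_add_singleton, Prod.mk_add_mk, add_zero]

theorem abs_addCost (p : Player) (c : ℕ × ℕ) (P : Interp) :
    abs p (addCost c P) = addCost c (abs p P) := by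
  funext L
  cases L with
  | atom => simp [abs, addCost]
  | arrow M p' q L =>
    ext w
    simp only [abs, mem_addCost_iff, Set.mem_ofPred_eq]
    constructor
    · rintro ⟨rfl, v, hv, h⟩
      obtain ⟨⟨N, v⟩, rfl⟩ := (DerivWeight.insert 0).surjective v
      rw [← DerivWeight.insert_cost_add] at h
      obtain ⟨rfl, rfl⟩ := Prod.mk.inj ((DerivWeight.insert 0).injective h)
      exact ⟨v, ⟨rfl, hv⟩, rfl⟩
    · rintro ⟨v, ⟨rfl, hv⟩, rfl⟩
      exact ⟨rfl, _, hv, (DerivWeight.insert_cost_add _ _ _ _).symm⟩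

theorem app_addCost (q : Player) (c : ℕ × ℕ) (P U : Interp) :
    app q (addCost c P) U = addCost c (app q P U) := by
  funext L
  simp only [app, addCost, Set.add_iUnion]
  exact Set.iUnion₂_congr fun M p => by ac_rfl

/-- The action of a transformation of weights on interpretations. -/
def map (θ : DerivWeight →+ Set DerivWeight) (P : Interp) : Interp := fun L => setLift θ (P L)

theorem map_apply (θ : DerivWeight →+ Set DerivWeight) (P : Interp) (L : LType) :
    map θ P L = setLift θ (P L) :=
  rfl

theorem map_var (θ : DerivWeight →+ Set DerivWeight) (x : ℕ) (L : LType) :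
    map θ (var x) L = θ (TEnv.single x L, 0) :=
  setLift_singleton θ _

theorem many_map (θ : DerivWeight →+ Set DerivWeight) (P : Interp) (M : Multiset LType) :
    many (map θ P) M = setLift θ (many P M) := by
  rw [many_apply, many_apply, map_multiset_sum, Multiset.map_map]
  rfl

theorem map_app {θ : DerivWeight →+ Set DerivWeight} (hθ : ∀ c, θ (0, c) = {(0, c)})
    (q : Player) (P U : Interp) :
    map θ (app q P U) = app q (map θ P) (map θ U) := by
  funext L
  simp only [app, map_apply, many_map, setLift_iUnion, map_add, setLift_singleton, hθ]

theorem map_abs {θ θ' : DerivWeight →+ Set DerivWeight}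
    (hθ : ∀ M w, θ' (DerivWeight.insert 0 (M, w)) = (fun v => DerivWeight.insert 0 (M, v)) '' θ w)
    (p : Player) (P : Interp) :
    map θ (abs p P) = abs p (map θ' P) := by
  funext L
  cases L with
  | atom => simp [map_apply, abs, setLift_apply]
  | arrow M p' q L =>
    ext w
    simp only [map_apply, abs, mem_setLift, Set.mem_ofPred_eq]
    constructor
    · rintro ⟨v, ⟨rfl, hv⟩, hw⟩
      exact ⟨rfl, _, hv, hθ _ v ▸ Set.mem_image_of_mem _ hw⟩
    · rintro ⟨rfl, v, hv, hw⟩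
      obtain ⟨⟨N, v⟩, rfl⟩ := (DerivWeight.insert 0).surjective v
      rw [hθ] at hw
      obtain ⟨w', hw', h⟩ := hw
      obtain ⟨rfl, rfl⟩ := Prod.mk.inj ((DerivWeight.insert 0).injective h)
      exact ⟨v, ⟨rfl, hv⟩, hw'⟩

/-- The transformation of weights induced by `CTerm.liftAt · d`. -/
def shift (d : ℕ) : DerivWeight →+ Set DerivWeight :=
  Set.singletonAddMonoidHom.comp
    ((DerivWeight.insert d).toAddMonoidHom.comp (AddMonoidHom.inr (Multiset LType) DerivWeight))

/-- The transformation of weights induced by the substitution of a term interpreted by `U` for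
the variable `x`: the multi type of `x` is traded for derivations of that multi type. -/
def replace (x : ℕ) (U : Interp) : DerivWeight →+ Set DerivWeight :=
  ((many U).coprod Set.singletonAddMonoidHom).comp (DerivWeight.insert x).symm.toAddMonoidHom

theorem shift_apply (d : ℕ) (w : DerivWeight) : shift d w = {DerivWeight.insert d (0, w)} :=
  rfl

theorem replace_insert (x : ℕ) (U : Interp) (M : Multiset LType) (w : DerivWeight) :
    replace x U (DerivWeight.insert x (M, w)) = many U M + {w} := by
  simp [replace]

theorem shift_cost (d : ℕ) (c : ℕ × ℕ) : shift d (0, c) = {(0, c)} := by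
  rw [shift_apply, DerivWeight.insert_cost]

theorem replace_cost (x : ℕ) (U : Interp) (c : ℕ × ℕ) : replace x U (0, c) = {(0, c)} := by
  rw [← DerivWeight.insert_cost x, replace_insert, map_zero, zero_add, DerivWeight.insert_cost]

theorem shift_succ_insert_zero (d : ℕ) (M : Multiset LType) (w : DerivWeight) :
    shift (d + 1) (DerivWeight.insert 0 (M, w)) =
      (fun v => DerivWeight.insert 0 (M, v)) '' shift d w := by
  simp only [shift_apply, Set.image_singleton, DerivWeight.insert_succ_insert_zero]

theorem replace_succ_insert_zero (x : ℕ) (U : Interp) (M : Multiset LType) (w : DerivWeight) :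
    replace (x + 1) (map (shift 0) U) (DerivWeight.insert 0 (M, w)) =
      (fun v => DerivWeight.insert 0 (M, v)) '' replace x U w := by
  obtain ⟨⟨N, w⟩, rfl⟩ := (DerivWeight.insert x).surjective w
  rw [← DerivWeight.insert_succ_insert_zero, replace_insert, replace_insert, many_map, shift,
    setLift_singletonAddMonoidHom_comp]
  simp only [Set.add_singleton, Set.image_image]
  refine Set.image_congr' fun v => ?_
  simp [← map_add]

theorem map_shift_var (d n : ℕ) :
    map (shift d) (var n) = var (if n < d then n else n + 1) := by
  funext L
  rw [map_var, shift_apply, DerivWeight.insert_zero_single]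
  rfl

theorem map_replace_var_self (x : ℕ) (U : Interp) : map (replace x U) (var x) = U := by
  funext L
  rw [map_var, ← DerivWeight.insert_singleton_zero, replace_insert, many_singleton]
  exact add_zero _

theorem map_replace_var_of_ne {n x : ℕ} (h : n ≠ x) (U : Interp) :
    map (replace x U) (var n) = var (if x < n then n - 1 else n) := by
  generalize hm : (if x < n then n - 1 else n) = m
  obtain rfl : (if m < x then m else m + 1) = n := by grind
  funext L
  rw [map_var, ← DerivWeight.insert_zero_single, replace_insert, map_zero, zero_add]
  rfl

theorem app_abs (q p : Player) (P U : Interp) :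
    app q (abs p P) U = addCost (p.gamma q, 1) (map (replace 0 U) P) := by
  ext L w
  simp only [mem_app_iff, mem_addCost_iff, map_apply, mem_setLift]
  constructor
  · rintro ⟨M, _, v, ⟨rfl, hv⟩, u, hu, rfl⟩
    refine ⟨v + u, ⟨_, hv, ?_⟩, rfl⟩
    rw [replace_insert, add_comm v u]
    exact Set.add_mem_add hu rfl
  · rintro ⟨_, ⟨v, hv, h⟩, rfl⟩
    obtain ⟨⟨M, v⟩, rfl⟩ := (DerivWeight.insert 0).surjective v
    obtain ⟨M, rfl⟩ : ∃ l : List LType, ↑l = M := ⟨_, M.coe_toList⟩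
    rw [replace_insert] at h
    obtain ⟨u, hu, v, rfl, rfl⟩ := h
    exact ⟨M, p, v, ⟨rfl, hv⟩, u, hu, congrArg _ (add_comm v u)⟩

end Interp

/-! ### Sized derivations -/

namespace CTerm

open scoped Pointwise

/-- The checkers relational interpretation of `t`, refined by the size of the derivations. -/
def interp (t : CTerm) : Interp := fun L =>
  {w | ∃ (Γ : TEnv) (k : ℕ) (π : Deriv Γ k t L), (Γ, k, π.size) = w}

theorem mem_CSem_iff {t : CTerm} {Γ : TEnv} {k : ℕ} {L : LType} :
    (Γ, k, L) ∈ CSem t ↔ ∃ n, (Γ, k, n) ∈ t.interp L := by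
  constructor
  · rintro ⟨π⟩
    exact ⟨π.size, Γ, k, π, rfl⟩
  · rintro ⟨_, _, _, π, h⟩
    cases h
    exact ⟨π⟩

theorem mem_many_interp_iff {t : CTerm} {M : List LType} {w : DerivWeight} :
    w ∈ t.interp.many ↑M ↔
      ∃ (Γ : TEnv) (k : ℕ) (μ : DerivM Γ k t M), (Γ, k, μ.size) = w := by
  induction M generalizing w with
  | nil =>
    rw [Multiset.coe_nil, map_zero, Set.mem_zero]
    constructor
    · rintro rfl
      exact ⟨_, _, .nil t, rfl⟩
    · rintro ⟨_, _, μ, rfl⟩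
      cases μ
      rfl
  | cons L M ih =>
    rw [← Multiset.cons_coe, Interp.many_cons]
    constructor
    · rintro ⟨_, ⟨Γ, k, π, rfl⟩, _, hμ, rfl⟩
      obtain ⟨Δ, k', μ, rfl⟩ := ih.1 hμ
      exact ⟨_, _, .cons π μ, rfl⟩
    · rintro ⟨_, _, μ, rfl⟩
      cases μ with
      | cons π μ => exact ⟨_, ⟨_, _, π, rfl⟩, _, ih.2 ⟨_, _, μ, rfl⟩, rfl⟩

theorem interp_var (x : ℕ) : (var x).interp = Interp.var x := by
  ext L w
  constructor
  · rintro ⟨_, _, π, rfl⟩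
    cases π
    rfl
  · rintro rfl
    exact ⟨_, _, .ax x L, rfl⟩

theorem interp_lam (p : Player) (t : CTerm) : (lam p t).interp = Interp.abs p t.interp := by
  ext L w
  constructor
  · rintro ⟨Γ, k, π, rfl⟩
    cases π with
    | lam _ q M π => exact ⟨rfl, _, _, π, (DerivWeight.insert_zero _ _ _).symm⟩
  · intro h
    cases L with
    | atom => exact h.elim
    | arrow M p' q L =>
      obtain ⟨Γ, k, n⟩ := w
      obtain ⟨rfl, _, _, π, h⟩ := h
      rw [DerivWeight.insert_zero] at h
      cases h
      exact ⟨_, _, .lam _ q M π, rfl⟩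

theorem interp_app (q : Player) (t u : CTerm) :
    (app q t u).interp = Interp.app q t.interp u.interp := by
  ext L w
  rw [Interp.mem_app_iff]
  constructor
  · rintro ⟨_, _, π, rfl⟩
    cases π with
    | @app Γ Δ k₁ k₂ _ _ M p _ _ π μ =>
      refine ⟨M, p, _, ⟨_, _, π, rfl⟩, _, mem_many_interp_iff.2 ⟨_, _, μ, rfl⟩, ?_⟩
      exact Prod.ext (zero_add _) (Prod.ext (add_comm _ _) (add_comm _ _))
  · rintro ⟨M, p, _, ⟨Γ, k₁, π, rfl⟩, _, hμ, rfl⟩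
    obtain ⟨Δ, k₂, μ, rfl⟩ := mem_many_interp_iff.1 hμ
    refine ⟨_, _, .app π μ, ?_⟩
    exact Prod.ext (zero_add _).symm (Prod.ext (add_comm _ _) (add_comm _ _))

theorem interp_liftAt (t : CTerm) (d : ℕ) :
    (t.liftAt d).interp = t.interp.map (Interp.shift d) := by
  induction t generalizing d with
  | var n => rw [liftAt, interp_var, interp_var, Interp.map_shift_var]
  | lam p t ih =>
    rw [liftAt, interp_lam, interp_lam, ih, Interp.map_abs (Interp.shift_succ_insert_zero d)]
  | app q t u iht ihu =>
    rw [liftAt, interp_app, interp_app, iht, ihu, Interp.map_app (Interp.shift_cost d)]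

theorem interp_subst (t : CTerm) (x : ℕ) (u : CTerm) :
    (t.subst x u).interp = t.interp.map (Interp.replace x u.interp) := by
  induction t generalizing x u with
  | var n =>
    rw [subst, interp_var]
    split_ifs with h hx
    · rw [h, Interp.map_replace_var_self]
    · rw [Interp.map_replace_var_of_ne h, if_pos hx, interp_var]
    · rw [Interp.map_replace_var_of_ne h, if_neg hx, interp_var]
  | lam p t ih =>
    rw [subst, interp_lam, interp_lam, ih, interp_liftAt,
      Interp.map_abs (Interp.replace_succ_insert_zero x u.interp)]
  | app q t s iht ihs =>
    rw [subst, interp_app, interp_app, iht, ihs,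
      Interp.map_app (Interp.replace_cost x u.interp)]

end CTerm

/-! ### Head reduction -/

theorem CTerm.interp_beta (q p : Player) (t u : CTerm) :
    (app q (lam p t) u).interp = (t.subst 0 u).interp.addCost (p.gamma q, 1) := by
  rw [interp_app, interp_lam, Interp.app_abs, interp_subst]

theorem CSpine.interp_eq {R : CTerm → CTerm → Prop} {c : ℕ × ℕ}
    (hR : ∀ t u, R t u → t.interp = u.interp.addCost c) {t u : CTerm} (h : CSpine R t u) :
    t.interp = u.interp.addCost c := by
  induction h with
  | root h => exact hR _ _ h
  | appL q s _ ih => rw [CTerm.interp_app, CTerm.interp_app, ih, Interp.app_addCost]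

theorem CHead.interp_eq {R : CTerm → CTerm → Prop} {c : ℕ × ℕ}
    (hR : ∀ t u, R t u → t.interp = u.interp.addCost c) {t u : CTerm} (h : CHead R t u) :
    t.interp = u.interp.addCost c := by
  induction h with
  | spine h => exact h.interp_eq hR
  | lam p _ ih => rw [CTerm.interp_lam, CTerm.interp_lam, ih, Interp.abs_addCost]

theorem HStepTau.interp_eq {t u : CTerm} (h : HStepTau t u) :
    t.interp = u.interp.addCost (0, 1) := by
  refine CHead.interp_eq ?_ h
  rintro _ _ ⟨p, t, u⟩
  rw [CTerm.interp_beta, Player.gamma, if_pos rfl]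

theorem Lam.tag_liftAt (p : Player) (t : Lam) (d : ℕ) :
    (t.liftAt d).tag p = (t.tag p).liftAt d := by
  induction t generalizing d <;> simp_all [Lam.liftAt, Lam.tag, CTerm.liftAt]

theorem Lam.tag_subst (p : Player) (t : Lam) (x : ℕ) (u : Lam) :
    (t.subst x u).tag p = (t.tag p).subst x (u.tag p) := by
  induction t generalizing x u with
  | var n =>
    simp only [Lam.subst, Lam.tag, CTerm.subst]
    split_ifs <;> rfl
  | lam t ih => simp only [Lam.subst, Lam.tag, CTerm.subst, ih, Lam.tag_liftAt]
  | app t s iht ihs => simp only [Lam.subst, Lam.tag, CTerm.subst, iht, ihs]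

theorem LSpine.tag (p : Player) {t u : Lam} (h : LSpine LBetaRoot t u) :
    CSpine SilentRoot (t.tag p) (u.tag p) := by
  induction h with
  | root h =>
    obtain ⟨t, u⟩ := h
    rw [Lam.tag_subst]
    exact .root (.beta p _ _)
  | appL u _ ih => exact .appL p _ ih

theorem LHStep.tag (p : Player) {t u : Lam} (h : LHStep t u) :
    HStepTau (t.tag p) (u.tag p) := by
  induction h with
  | spine h => exact .spine (h.tag p)
  | lam _ ih => exact .lam p ih

theorem LHSteps.exists_interp_tag_eq (p : Player) {t u : Lam} (h : LHSteps t u) :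
    ∃ m, (t.tag p).interp = (u.tag p).interp.addCost (0, m) := by
  induction h with
  | refl => exact ⟨0, (Interp.addCost_zero _).symm⟩
  | tail _ h ih =>
    obtain ⟨m, ih⟩ := ih
    refine ⟨m + 1, ?_⟩
    rw [ih, (h.tag p).interp_eq, Interp.addCost_addCost, Prod.mk_add_mk, add_zero]

/-- The size strictly decreases along head steps, so head reduction of a typable term stops. -/
theorem Lam.hConv_of_mem_interp_tag {p : Player} {t : Lam} {L : LType} {Γ : TEnv} {k n : ℕ}
    (h : (Γ, k, n) ∈ (t.tag p).interp L) : t.HConv := by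
  induction n using Nat.strong_induction_on generalizing t with
  | h n ih =>
    by_cases ht : t.LHNF
    · exact ⟨t, .refl, ht⟩
    obtain ⟨u, hu⟩ : ∃ u, LHStep t u := by simpa [LHNF] using ht
    rw [(hu.tag p).interp_eq, Interp.mk_mem_addCost_iff] at h
    obtain ⟨k', m, h, hk, hn⟩ := h
    obtain rfl : k' = k := by omega
    obtain ⟨v, hv, hnf⟩ := ih m (by omega) h
    exact ⟨v, hv.head hu, hnf⟩

/-! ### The Böhm preorder -/

/-- Every judgement of `P` witnessed by a derivation of size less than `N` is a judgement of `Q`,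
whatever the size of the derivation witnessing it there. -/
def Interp.LeUpTo (N : ℕ) (P Q : Interp) : Prop :=
  ∀ ⦃L : LType⦄ ⦃Γ : TEnv⦄ ⦃k n : ℕ⦄, (Γ, k, n) ∈ P L → n < N → ∃ n', (Γ, k, n') ∈ Q L

namespace Interp.LeUpTo

variable {N : ℕ} {P Q U U' : Interp}

protected theorem refl (N : ℕ) (P : Interp) : LeUpTo N P P :=
  fun _ _ _ n h _ => ⟨n, h⟩

protected theorem abs (p : Player) (h : LeUpTo N P Q) : LeUpTo N (abs p P) (abs p Q)
  | .atom, _, _, _, hw, _ => hw.elim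
  | .arrow M p' q L, _, _, _, ⟨hp, hw⟩, hn => by
    obtain ⟨n', hw'⟩ := h hw hn
    exact ⟨n', hp, hw'⟩

protected theorem many (h : LeUpTo N P Q) {M : Multiset LType} {Γ : TEnv} {k n : ℕ}
    (hw : (Γ, k, n) ∈ many P M) (hn : n < N) : ∃ n', (Γ, k, n') ∈ many Q M := by
  induction M using Multiset.induction generalizing Γ k n with
  | empty => exact ⟨n, by simpa using hw⟩
  | cons L M ih =>
    rw [many_cons] at hw ⊢
    obtain ⟨⟨Γ₁, k₁, n₁⟩, h₁, ⟨Γ₂, k₂, n₂⟩, h₂, hw⟩ := hw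
    obtain ⟨rfl, rfl, rfl⟩ : Γ₁ + Γ₂ = Γ ∧ k₁ + k₂ = k ∧ n₁ + n₂ = n := by simpa using hw
    obtain ⟨n₁', h₁'⟩ := h h₁ (by omega)
    obtain ⟨n₂', h₂'⟩ := ih h₂ (by omega)
    exact ⟨_, Set.add_mem_add h₁' h₂'⟩

/-- The `@` rule itself is counted, so arguments need only agree up to a strictly smaller size. -/
protected theorem app (q : Player) (hP : LeUpTo (N + 1) P Q) (hU : LeUpTo N U U') :
    LeUpTo (N + 1) (app q P U) (app q Q U') := by
  intro L Γ k n hw hn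
  obtain ⟨M, p, ⟨Γ₁, k₁, n₁⟩, h₁, ⟨Γ₂, k₂, n₂⟩, h₂, hw⟩ := mem_app_iff.1 hw
  obtain ⟨rfl, rfl, rfl⟩ : Γ₁ + Γ₂ = Γ ∧ p.gamma q + (k₁ + k₂) = k ∧ 1 + (n₁ + n₂) = n := by
    simpa using hw
  obtain ⟨n₁', h₁'⟩ := hP h₁ (by omega)
  obtain ⟨n₂', h₂'⟩ := hU.many h₂ (by omega)
  exact ⟨1 + (n₁' + n₂'), mem_app_iff.2 ⟨M, p, _, h₁', _, h₂', Prod.ext (zero_add _) rfl⟩⟩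

protected theorem addCost {i m m' : ℕ} (h : LeUpTo N P Q) :
    LeUpTo N (addCost (i, m) P) (addCost (i, m') Q) := by
  intro L Γ k n hw hn
  obtain ⟨k', n₁, hw, hk, hn₁⟩ := mk_mem_addCost_iff.1 hw
  obtain ⟨n₂, hw⟩ := h hw (by omega)
  exact ⟨m' + n₂, mk_mem_addCost_iff.2 ⟨k', n₂, hw, hk, rfl⟩⟩

theorem absN (p : Player) {t u : Lam} (h : LeUpTo N (t.tag p).interp (u.tag p).interp) (n : ℕ) :
    LeUpTo N ((Lam.absN n t).tag p).interp ((Lam.absN n u).tag p).interp := by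
  induction n with
  | zero => exact h
  | succ n ih =>
    rw [Lam.absN, Lam.absN, Lam.tag, Lam.tag, CTerm.interp_lam, CTerm.interp_lam]
    exact ih.abs p

theorem appList (p : Player) {ts us : List Lam}
    (hs : ts.Forall₂ (fun t u => LeUpTo N (t.tag p).interp (u.tag p).interp) us) {t u : Lam}
    (h : LeUpTo (N + 1) (t.tag p).interp (u.tag p).interp) :
    LeUpTo (N + 1) ((t.appList ts).tag p).interp ((u.appList us).tag p).interp := by
  induction hs generalizing t u with
  | nil => exact h
  | cons hs _ ih =>
    refine ih ?_
    rw [Lam.tag, Lam.tag, CTerm.interp_app, CTerm.interp_app]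
    exact h.app p hs

theorem of_bohmClause {R : Lam → Lam → Prop} (p : Player)
    (hR : ∀ t u, R t u → LeUpTo N (t.tag p).interp (u.tag p).interp) {t u : Lam}
    (h : BohmClause R t u) : LeUpTo (N + 1) (t.tag p).interp (u.tag p).interp := by
  obtain ht | ⟨n, y, ts, us, hlen, ht, hu, hs⟩ := h
  · exact fun L Γ k n hw => absurd (Lam.hConv_of_mem_interp_tag hw) ht
  obtain ⟨m, ht⟩ := ht.exists_interp_tag_eq p
  obtain ⟨m', hu⟩ := hu.exists_interp_tag_eq p
  rw [ht, hu]
  have hargs : ts.Forall₂ (fun t u => LeUpTo N (t.tag p).interp (u.tag p).interp) us :=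
    List.forall₂_iff_get.2 ⟨hlen, fun i hi hj => hR _ _ (hs i hi hj)⟩
  exact ((appList p hargs (.refl _ _)).absN p n).addCost

theorem of_bohmLe (p : Player) {t u : Lam} (h : BohmLe t u) (N : ℕ) :
    LeUpTo N (t.tag p).interp (u.tag p).interp := by
  obtain ⟨R, hR, htu⟩ := h
  induction N generalizing t u with
  | zero => exact fun _ _ _ _ _ hn => absurd hn (Nat.not_lt_zero _)
  | succ N ih => exact of_bohmClause p (fun t u => ih) (hR t u htu)

end Interp.LeUpTo

theorem bohm_included_in_black_type_preorder_general (p : Player) {t u : Lam} (h : BohmLe t u) :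
    CSem (t.tag p) ⊆ CSem (u.tag p) := by
  rintro ⟨Γ, k, L⟩ hΓ
  obtain ⟨n, hn⟩ := CTerm.mem_CSem_iff.1 hΓ
  exact CTerm.mem_CSem_iff.2 (Interp.LeUpTo.of_bohmLe p h (n + 1) hn n.lt_succ_self)

/-- The Böhm preorder is included in the black checkers type preorder. -/
theorem bohm_included_in_black_type_preorder (t u : Lam) (h : BohmLe t u) :
    BTypeLe t u :=
  bohm_included_in_black_type_preorder_general .black h
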